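/- Let (h_k)_{k≥0} be the rational sequence defined by h_0 = 1 and h_k = (k+1)/k · Σ_{j_1+j_2 = k−1, j_i ≥ 0} h_{j_1}·h_{j_2} for k ≥ 1, and define d_k := k!·h_k/(k+1) for k ≥ 1. Then for every k ≥ 1, (k+1)·d_k = 2^k·(k+1)^{k-1}; equivalently, d_k = 2^k·(k+1)^{k-2} for k ≥ 2 and d_1 = 1. -/

import Mathlib

open Polynomial in
/-- Normalized Abel polynomials. -/
noncomputable def abelP : ℕ → ℚ[X]
  | 0 => 1
  | (n+1) => C (1 / ((n+1).factorial : ℚ)) * (X * (X + C ((n:ℚ)+1)) ^ n)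

open Polynomial in
lemma abelP_deriv (n : ℕ) : derivative (abelP (n+1)) = (abelP n).comp (X + C 1) := by
  cases n with
  | zero => simp [abelP]
  | succ m =>
    apply Polynomial.funext
    intro r
    have h1 : ((m+1).factorial : ℚ) ≠ 0 := by positivity
    have h2 : (m:ℚ) + 1 + 1 ≠ 0 := by positivity
    simp only [abelP, derivative_mul, derivative_C, derivative_X, derivative_pow, derivative_add,
      eval_mul, eval_add, eval_pow, eval_C, eval_X, eval_comp, eval_zero, eval_one,
      Nat.factorial_succ (m+1)]
    push_cast
    rw [show r + 1 + ((m:ℚ) + 1) = r + ((m:ℚ) + 1 + 1) by ring]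
    field_simp
    ring

open Polynomial in
lemma abelP_zero (n : ℕ) : (abelP (n+1)).eval 0 = 0 := by simp [abelP]

open Polynomial in
lemma abelP_conv (y : ℚ) (n : ℕ) :
    ∑ j ∈ Finset.HasAntidiagonal.antidiagonal n, abelP j.1 * C ((abelP j.2).eval y)
      = (abelP n).comp (X + C y) := by
  induction n with
  | zero => simp [abelP]
  | succ n ih =>
    rw [← sub_eq_zero]
    set p := ∑ j ∈ Finset.HasAntidiagonal.antidiagonal (n+1),
      abelP j.1 * C ((abelP j.2).eval y) - (abelP (n+1)).comp (X + C y) with hp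
    have hder : derivative p = 0 := by
      rw [hp, Finset.Nat.sum_antidiagonal_succ]
      simp only [derivative_sub, derivative_add, derivative_sum, derivative_mul, derivative_C,
        abelP_deriv, derivative_comp]
      have := congrArg (fun q => q.comp (X + C (1:ℚ))) ih
      simp only [Polynomial.sum_comp, mul_comp, C_comp] at this
      simp only [mul_zero, add_zero, this, comp_assoc]
      simp only [abelP, derivative_one, derivative_X, zero_mul, zero_add, one_mul, add_comp, X_comp, C_comp]
      rw [show (X + C y + C 1 : ℚ[X]) = X + C 1 + C y by ring]
      simp
    have h0 : p.eval 0 = 0 := by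
      rw [hp, Finset.Nat.sum_antidiagonal_succ]
      simp only [eval_sub, eval_add, eval_finsetSum, eval_mul, abelP_zero, eval_comp, eval_C, eval_X]
      simp [abelP]
    have := derivative_eq_zero.mp hder
    rw [eq_C_of_natDegree_eq_zero this, coeff_zero_eq_eval_zero, h0, C_0]

open Polynomial in
lemma h_eq (h : ℕ → ℚ)
    (h0 : h 0 = 1)
    (hrec : ∀ k : ℕ, 1 ≤ k →
      h k = (((k + 1 : ℕ) : ℚ) / (k : ℚ)) *
        ∑ j ∈ Finset.HasAntidiagonal.antidiagonal (k - 1), h j.1 * h j.2) (k : ℕ) :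
    h k = 2 ^ k * (abelP k).eval 1 := by
  induction k using Nat.strong_induction_on with
  | _ k ih =>
    cases k with
    | zero => simp [h0, abelP]
    | succ n =>
      rw [hrec (n+1) (by omega), Nat.add_sub_cancel]
      have e : ∑ j ∈ Finset.HasAntidiagonal.antidiagonal n, h j.1 * h j.2
          = 2 ^ n * (abelP n).eval 2 := by
        have := congrArg (eval (1:ℚ)) (abelP_conv 1 n)
        simp only [eval_finsetSum, eval_mul, eval_C, eval_comp, eval_add, eval_X] at this
        rw [show (2:ℚ) = 1 + 1 by norm_num, ← this, Finset.mul_sum]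
        refine Finset.sum_congr rfl fun j hj => ?_
        have hj' := Finset.HasAntidiagonal.mem_antidiagonal.mp hj
        rw [ih j.1 (by omega), ih j.2 (by omega), ← hj', pow_add]
        norm_num
        ring
      rw [e]
      cases n with
      | zero => simp [abelP]
      | succ m =>
        have h1 : ((m+1).factorial : ℚ) ≠ 0 := by positivity
        have h2 : (m:ℚ) + 1 + 1 ≠ 0 := by positivity
        simp only [abelP, eval_mul, eval_C, eval_X, eval_pow, eval_add, Nat.factorial_succ (m+1)]
        push_cast
        rw [show (1:ℚ) + ((m:ℚ) + 1 + 1) = 2 + ((m:ℚ) + 1) by ring,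
          show (m:ℚ) + 1 + 1 + 1 = 2 + ((m:ℚ) + 1) by ring]
        field_simp
        ring


/-- The case `q = 2`: with `h 0 = 1`,
`h k = (k+1)/k · ∑_{j₁+j₂=k-1} h j₁ · h j₂` for `k ≥ 1`, and
`d k := k!·h k/(k+1)`, one has `(k+1)·d k = 2^k·(k+1)^(k-1)` for all `k ≥ 1`;
equivalently `d k = 2^k·(k+1)^(k-2)` for `k ≥ 2` and `d 1 = 1`. -/
theorem stmt_2 (h : ℕ → ℚ)
    (h0 : h 0 = 1)
    (hrec : ∀ k : ℕ, 1 ≤ k →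
      h k = (((k + 1 : ℕ) : ℚ) / (k : ℚ)) *
        ∑ j ∈ Finset.HasAntidiagonal.antidiagonal (k - 1), h j.1 * h j.2)
    (d : ℕ → ℚ)
    (hd : ∀ k : ℕ, 1 ≤ k → d k = (Nat.factorial k : ℚ) * h k / ((k + 1 : ℕ) : ℚ)) :
    (∀ k : ℕ, 1 ≤ k → ((k + 1 : ℕ) : ℚ) * d k = 2 ^ k * ((k + 1 : ℕ) : ℚ) ^ (k - 1))
      ∧ (∀ k : ℕ, 2 ≤ k → d k = 2 ^ k * ((k + 1 : ℕ) : ℚ) ^ (k - 2))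
      ∧ d 1 = 1 := by

  have key : ∀ k : ℕ, 1 ≤ k →
      ((k + 1 : ℕ) : ℚ) * d k = 2 ^ k * ((k + 1 : ℕ) : ℚ) ^ (k - 1) := by
    intro k hk
    obtain ⟨n, rfl⟩ : ∃ n, k = n + 1 := ⟨k - 1, by omega⟩
    rw [hd _ hk, h_eq h h0 hrec]
    have h1 : ((n+1).factorial : ℚ) ≠ 0 := by positivity
    have h2 : (n:ℚ) + 1 + 1 ≠ 0 := by positivity
    simp only [abelP, Polynomial.eval_mul, Polynomial.eval_C, Polynomial.eval_X,
      Polynomial.eval_pow, Polynomial.eval_add, Nat.add_sub_cancel]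
    push_cast
    rw [show (1:ℚ) + ((n:ℚ) + 1) = n + 1 + 1 by ring]
    field_simp
  refine ⟨key, fun k hk => ?_, ?_⟩
  · have hk1 := key k (by omega)
    have h2 : ((k + 1 : ℕ) : ℚ) ≠ 0 := by positivity
    apply mul_left_cancel₀ h2
    rw [hk1, show k - 1 = (k - 2) + 1 by omega, pow_succ]
    ring
  · have := key 1 le_rfl
    norm_num at this
    linarith
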